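/- arXiv:1707.08875 — 3 statements merged into one kernel-verified Lean document; each statement's English description precedes it below -/
import Mathlib

section
/- Let {J_{ij}} be i.i.d. nonnegative heavy-tailed couplings with tail index 0 < α < 1, i.e., P(J_{12} ≥ x) = x^{−α} L(x) with L slowly varying. Then with probability tending to 1 as N → ∞, the Hamiltonian H has at least one nontrivial local minimum on {±1}^N. -/
open MeasureTheory ProbabilityTheory Filter Finset

/-- Index set for the couplings: unordered pairs `{i,j}` with `i < j`, encoded as ordered pairs. -/
abbrev CoupIdx (N : ℕ) := {q : Fin N × Fin N // q.1 < q.2}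

/-- The symmetric coupling matrix built from couplings indexed by pairs `i < j`. -/
noncomputable def JofReal {N : ℕ} (w : CoupIdx N → ℝ) (i j : Fin N) : ℝ :=
  if h : i < j then w ⟨(i, j), h⟩ else if h' : j < i then w ⟨(j, i), h'⟩ else 0

/-- Hamiltonian of the disordered Curie--Weiss model:
`H(σ) = -(1/N) ∑_{i<j} J_{ij} σ_i σ_j`. -/
noncomputable def Ham {N : ℕ} (J : Fin N → Fin N → ℝ) (σ : Fin N → ℤ) : ℝ :=
  -(1 / (N : ℝ)) * ∑ q ∈ Finset.univ.filter (fun q : Fin N × Fin N => q.1 < q.2),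
      J q.1 q.2 * (σ q.1 : ℝ) * (σ q.2 : ℝ)

/-- `(i,j)` is a bully bond: `J_{ij} > max(∑_{k∉{i,j}} J_{ik}, ∑_{k∉{i,j}} J_{jk})`. -/
def IsBullyBond {N : ℕ} (J : Fin N → Fin N → ℝ) (i j : Fin N) : Prop :=
  i ≠ j ∧
    max (∑ k ∈ (Finset.univ.erase i).erase j, J i k)
      (∑ k ∈ (Finset.univ.erase i).erase j, J j k) < J i j

/-- `σ` is a nontrivial local minimum of `H`. -/
def IsNontrivialLocalMin {N : ℕ} (J : Fin N → Fin N → ℝ) (σ : Fin N → ℤ) : Prop :=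
  (∀ i, σ i = 1 ∨ σ i = -1) ∧ σ ≠ (fun _ => 1) ∧ σ ≠ (fun _ => -1) ∧
    ∀ i, Ham J σ ≤ Ham J (Function.update σ i (-σ i))

/-- Energy difference under a single spin flip, for symmetric couplings. -/
lemma Ham_update_sub {N : ℕ} (J : Fin N → Fin N → ℝ) (hJ : ∀ i j, J i j = J j i)
    (σ : Fin N → ℤ) (i : Fin N) :
    Ham J (Function.update σ i (-σ i)) - Ham J σ =
      2 / (N : ℝ) * ∑ k ∈ univ.erase i, J i k * (σ i : ℝ) * (σ k : ℝ) := by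
  classical
  have hterm : ∀ q : Fin N × Fin N, q.1 < q.2 →
      J q.1 q.2 * (Function.update σ i (-σ i) q.1 : ℝ) * (Function.update σ i (-σ i) q.2 : ℝ) -
        J q.1 q.2 * (σ q.1 : ℝ) * (σ q.2 : ℝ) =
      (if q.1 = i then -2 * (J i q.2 * (σ i : ℝ) * (σ q.2 : ℝ)) else 0) +
        (if q.2 = i then -2 * (J i q.1 * (σ i : ℝ) * (σ q.1 : ℝ)) else 0) := by
    rintro ⟨p, q⟩ hpq
    simp only at hpq ⊢
    by_cases h1 : p = i
    · subst h1
      have h2 : q ≠ p := hpq.ne'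
      simp [h2]
      ring
    · by_cases h2 : q = i
      · subst h2
        simp [h1, hJ q p]
        ring
      · simp [h1, h2]
  have hsum : ∑ q ∈ univ.filter (fun q : Fin N × Fin N => q.1 < q.2),
      ((if q.1 = i then -2 * (J i q.2 * (σ i : ℝ) * (σ q.2 : ℝ)) else 0) +
        (if q.2 = i then -2 * (J i q.1 * (σ i : ℝ) * (σ q.1 : ℝ)) else 0)) =
      -2 * ∑ k ∈ univ.erase i, J i k * (σ i : ℝ) * (σ k : ℝ) := by
    have herase : (univ.erase i : Finset (Fin N)) = univ.filter (fun k => k ≠ i) := by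
      ext; simp
    rw [sum_add_distrib, sum_filter, sum_filter, Fintype.sum_prod_type, Fintype.sum_prod_type_right]
    have e1 : ∀ p q : Fin N, (if p < q then
        (if p = i then -2 * (J i q * (σ i : ℝ) * (σ q : ℝ)) else 0) else 0) =
        if p = i then (if i < q then -2 * (J i q * (σ i : ℝ) * (σ q : ℝ)) else 0) else 0 := by
      intro p q
      by_cases h : p = i
      · subst h; simp
      · simp [h]
    have e2 : ∀ q p : Fin N, (if p < q then
        (if q = i then -2 * (J i p * (σ i : ℝ) * (σ p : ℝ)) else 0) else 0) =
        if q = i then (if p < i then -2 * (J i p * (σ i : ℝ) * (σ p : ℝ)) else 0) else 0 := by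
      intro q p
      by_cases h : q = i
      · subst h; simp
      · simp [h]
    simp only [e1, e2]
    rw [sum_comm]
    simp only [sum_ite_eq', mem_univ, if_true]
    rw [sum_comm]
    simp only [sum_ite_eq', mem_univ, if_true]
    rw [← sum_add_distrib, herase, sum_filter, mul_sum]
    refine sum_congr rfl fun k _ => ?_
    rcases lt_trichotomy k i with h | h | h
    · simp [h, h.not_gt, h.ne]
    · simp [h]
    · simp [h, h.not_gt, h.ne']
  unfold Ham
  rw [← mul_sub, ← sum_sub_distrib,
    sum_congr rfl (fun q hq => hterm q (mem_filter.1 hq).2), hsum]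
  ring

/-- Flipping an endpoint of a bully bond whose two spins agree does not lower the energy. -/
lemma Ham_le_update_of_dominant {N : ℕ} (J : Fin N → Fin N → ℝ) (hJ : ∀ i j, J i j = J j i)
    (hJ0 : ∀ i j, 0 ≤ J i j) (σ : Fin N → ℤ) (hσ : ∀ i, σ i = 1 ∨ σ i = -1)
    {i j : Fin N} (hij : i ≠ j) (hs : σ i = σ j)
    (hdom : ∑ k ∈ (univ.erase i).erase j, J i k ≤ J i j) :
    Ham J σ ≤ Ham J (Function.update σ i (-σ i)) := by
  rw [← sub_nonneg, Ham_update_sub J hJ]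
  refine mul_nonneg (by positivity) ?_
  rw [← add_sum_erase _ _ (mem_erase.2 ⟨hij.symm, mem_univ j⟩)]
  have hlow : -∑ k ∈ (univ.erase i).erase j, J i k ≤
      ∑ k ∈ (univ.erase i).erase j, J i k * (σ i : ℝ) * (σ k : ℝ) := by
    rw [← sum_neg_distrib]
    refine sum_le_sum fun k _ => ?_
    have := hJ0 i k
    rcases hσ i with h | h <;> rcases hσ k with h' | h' <;> simp [h, h'] <;> linarith
  have hj : J i j * (σ i : ℝ) * (σ j : ℝ) = J i j := by
    rcases hσ j with h | h <;> simp [hs, h]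
  linarith

/-- Two vertex-disjoint bully bonds force a nontrivial local minimum. -/
lemma exists_nontrivialLocalMin_of_bullyBonds {N : ℕ} (J : Fin N → Fin N → ℝ)
    (hJ : ∀ i j, J i j = J j i) (hJ0 : ∀ i j, 0 ≤ J i j) {a b c d : Fin N}
    (hab : IsBullyBond J a b) (hcd : IsBullyBond J c d)
    (hac : a ≠ c) (had : a ≠ d) (hbc : b ≠ c) (hbd : b ≠ d) :
    ∃ σ : Fin N → ℤ, IsNontrivialLocalMin J σ := by
  classical
  let S : Finset (Fin N → ℤ) := (Fintype.piFinset fun _ => ({1, -1} : Finset ℤ)).filter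
    fun σ => (σ a = 1 ∧ σ b = 1) ∧ (σ c = -1 ∧ σ d = -1)
  have hS : ∀ σ, σ ∈ S ↔ (∀ i, σ i = 1 ∨ σ i = -1) ∧
      (σ a = 1 ∧ σ b = 1) ∧ (σ c = -1 ∧ σ d = -1) := by
    intro σ
    simp [S]
  have hne : S.Nonempty := by
    refine ⟨fun i => if i = a ∨ i = b then 1 else -1, (hS _).2 ⟨fun i => ?_, ?_⟩⟩
    · by_cases h : i = a ∨ i = b <;> simp [h]
    · simp [hac.symm, had.symm, hbc.symm, hbd.symm]
  obtain ⟨σ, hσS, hmin⟩ := S.exists_min_image (Ham J) hne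
  obtain ⟨hσ, ⟨ha, hb⟩, hc, hd⟩ := (hS σ).1 hσS
  have bully : ∀ {i j : Fin N}, IsBullyBond J i j → σ i = σ j →
      Ham J σ ≤ Ham J (Function.update σ i (-σ i)) ∧
      Ham J σ ≤ Ham J (Function.update σ j (-σ j)) := by
    intro i j h hs
    refine ⟨Ham_le_update_of_dominant J hJ hJ0 σ hσ h.1 hs
      ((le_max_left _ _).trans h.2.le), Ham_le_update_of_dominant J hJ hJ0 σ hσ h.1.symm hs.symm ?_⟩
    rw [erase_right_comm, hJ j i]
    exact (le_max_right _ _).trans h.2.le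
  refine ⟨σ, hσ, fun h => ?_, fun h => ?_, fun i => ?_⟩
  · rw [h] at hc; norm_num at hc
  · rw [h] at ha; norm_num at ha
  · by_cases h1 : i = a
    · exact h1 ▸ (bully hab (ha.trans hb.symm)).1
    by_cases h2 : i = b
    · exact h2 ▸ (bully hab (ha.trans hb.symm)).2
    by_cases h3 : i = c
    · exact h3 ▸ (bully hcd (hc.trans hd.symm)).1
    by_cases h4 : i = d
    · exact h4 ▸ (bully hcd (hc.trans hd.symm)).2
    refine hmin _ ((hS _).2 ⟨fun k => ?_, ?_⟩)
    · by_cases hk : k = i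
      · subst hk
        rcases hσ k with h | h <;> simp [h]
      · simpa [hk] using hσ k
    · simp [Ne.symm h1, Ne.symm h2, Ne.symm h3, Ne.symm h4, ha, hb, hc, hd]

/-- Regular variation of the tail with index in `(-1, 0)` yields, at every small level `p`, a
threshold whose tail mass is comparable to `p` and whose truncated mean is controlled by the
tail mass. -/
lemma exists_threshold (α : ℝ) (hα1 : α < 1)
    (L : ℝ → ℝ) (hL : Tendsto (fun x => L (2 * x) / L x) atTop (nhds 1))
    (ν : Measure ℝ) [IsProbabilityMeasure ν]
    (htail : ∀ x : ℝ, 0 < x → ν.real (Set.Ici x) = x ^ (-α) * L x) :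
    ∃ C ρ δ : ℝ, 0 < C ∧ 0 < ρ ∧ 0 < δ ∧ ∀ p, 0 < p → p < δ → ∃ t : ℝ, 0 < t ∧
      ρ * p ≤ ν.real (Set.Ici t) ∧ ν.real (Set.Ici t) ≤ p ∧
      ∫⁻ x, ENNReal.ofReal (min x t) ∂ν ≤ ENNReal.ofReal (C * t * ν.real (Set.Ici t)) := by
  set G : ℕ → ℝ := fun k => ν.real (Set.Ici ((2 : ℝ) ^ k)) with hG
  have hpow : Tendsto (fun k : ℕ => (2 : ℝ) ^ k) atTop atTop :=
    tendsto_pow_atTop_atTop_of_one_lt one_lt_two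
  have hG0 : ∀ k, 0 ≤ G k := fun k => measureReal_nonneg
  have hanti : Antitone G := fun k l hkl => measureReal_mono
    (Set.Ici_subset_Ici.2 (pow_le_pow_right₀ one_le_two hkl))
  have hratio : Tendsto (fun k => G (k + 1) / G k) atTop (nhds ((2 : ℝ) ^ (-α))) := by
    have h := (hL.comp hpow).const_mul ((2 : ℝ) ^ (-α))
    rw [mul_one] at h
    refine h.congr fun k => ?_
    have hk : (0 : ℝ) < 2 ^ k := by positivity
    have hk' : (0 : ℝ) < ((2 : ℝ) ^ k) ^ (-α) := Real.rpow_pos_of_pos hk _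
    simp only [hG, Function.comp]
    rw [htail _ hk, htail _ (by positivity), pow_succ', Real.mul_rpow two_pos.le hk.le,
      mul_comm _ (((2 : ℝ) ^ k) ^ (-α)), mul_assoc, mul_div_mul_left _ _ hk'.ne', mul_div_assoc]
  have hGlim : Tendsto G atTop (nhds 0) := by
    have h1 : Tendsto (fun k : ℕ => ν (Set.Ici ((2 : ℝ) ^ k))) atTop (nhds 0) := by
      have h2 := tendsto_measure_iInter_atTop (μ := ν) (s := fun k : ℕ => Set.Ici ((2 : ℝ) ^ k))
        (fun k => measurableSet_Ici.nullMeasurableSet)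
        (fun k l hkl => Set.Ici_subset_Ici.2 (pow_le_pow_right₀ one_le_two hkl))
        ⟨0, measure_ne_top _ _⟩
      have h3 : ⋂ k : ℕ, Set.Ici ((2 : ℝ) ^ k) = ∅ := by
        refine Set.eq_empty_of_forall_notMem fun x hx => ?_
        obtain ⟨k, hk⟩ := pow_unbounded_of_one_lt x (one_lt_two (α := ℝ))
        exact absurd (Set.mem_iInter.1 hx k) (not_le.2 hk)
      rwa [h3, measure_empty] at h2
    exact (ENNReal.tendsto_toReal ENNReal.zero_ne_top).comp h1
  have hhalf : (1 / 2 : ℝ) < 2 ^ (-α) := by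
    rw [one_div, ← Real.rpow_neg_one]
    exact Real.rpow_lt_rpow_of_exponent_lt one_lt_two (by linarith)
  obtain ⟨ρ, hρ1, hρ2⟩ := exists_between hhalf
  obtain ⟨k₀, hk₀⟩ := eventually_atTop.1 (hratio.eventually_const_lt hρ2)
  have hpos : ∀ k, k₀ ≤ k → 0 < G k := fun k hk => by
    refine lt_of_le_of_ne (hG0 k) fun h => ?_
    have := hk₀ k hk
    rw [← h, div_zero] at this
    linarith
  have hstep : ∀ k, k₀ ≤ k → ρ * G k ≤ G (k + 1) := fun k hk =>
    ((lt_div_iff₀ (hpos k hk)).1 (hk₀ k hk)).le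
  set C : ℝ := max (1 / (2 * ρ - 1)) (1 / G k₀) with hC
  have hρ3 : 0 < 2 * ρ - 1 := by linarith
  have hCpos : 0 < C := lt_max_of_lt_left (by positivity)
  have hC1 : C + 1 ≤ 2 * ρ * C := by
    have : 1 / (2 * ρ - 1) ≤ C := le_max_left _ _
    rw [div_le_iff₀ hρ3] at this
    linarith
  have hC2 : 1 ≤ C * G k₀ := (div_le_iff₀ (hpos k₀ le_rfl)).1 (le_max_right _ _)
  have hmean : ∀ k, k₀ ≤ k → ∫⁻ x, ENNReal.ofReal (min x (2 ^ k)) ∂ν ≤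
      ENNReal.ofReal (C * 2 ^ k * G k) := by
    intro k hk
    induction k, hk using Nat.le_induction with
    | base =>
      calc ∫⁻ x, ENNReal.ofReal (min x (2 ^ k₀)) ∂ν ≤ ∫⁻ _, ENNReal.ofReal (2 ^ k₀) ∂ν :=
            lintegral_mono fun x => ENNReal.ofReal_le_ofReal (min_le_right _ _)
        _ = ENNReal.ofReal (2 ^ k₀) := by simp
        _ ≤ _ := ENNReal.ofReal_le_ofReal (by
            have : (0 : ℝ) < 2 ^ k₀ := by positivity
            nlinarith)
    | succ k hk ih =>
      have hk2 : (0 : ℝ) < 2 ^ k := by positivity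
      calc ∫⁻ x, ENNReal.ofReal (min x (2 ^ (k + 1))) ∂ν
          ≤ ∫⁻ x, (ENNReal.ofReal (min x (2 ^ k)) +
              (Set.Ici ((2 : ℝ) ^ k)).indicator (fun _ => ENNReal.ofReal (2 ^ k)) x) ∂ν := by
            refine lintegral_mono fun x => ?_
            by_cases hx : (2 : ℝ) ^ k ≤ x
            · simp only [Set.indicator_of_mem (Set.mem_Ici.2 hx), min_eq_right hx]
              rw [← ENNReal.ofReal_add hk2.le hk2.le]
              refine ENNReal.ofReal_le_ofReal ((min_le_right _ _).trans ?_)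
              rw [pow_succ]; linarith
            · simp only [Set.indicator_of_notMem (fun h => hx (Set.mem_Ici.1 h)), add_zero,
                min_eq_left (not_le.1 hx).le]
              exact ENNReal.ofReal_le_ofReal (min_le_left _ _)
        _ = ∫⁻ x, ENNReal.ofReal (min x (2 ^ k)) ∂ν +
              ENNReal.ofReal (2 ^ k) * ν (Set.Ici ((2 : ℝ) ^ k)) := by
            rw [lintegral_add_left (by fun_prop), lintegral_indicator_const measurableSet_Ici]
        _ ≤ ENNReal.ofReal (C * 2 ^ k * G k) + ENNReal.ofReal (2 ^ k * G k) := by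
            refine add_le_add ih (le_of_eq ?_)
            rw [ENNReal.ofReal_mul hk2.le, hG, ofReal_measureReal]
        _ = ENNReal.ofReal (C * 2 ^ k * G k + 2 ^ k * G k) := by
            have := hG0 k
            rw [ENNReal.ofReal_add (by positivity) (by positivity)]
        _ ≤ _ := ENNReal.ofReal_le_ofReal (by
            calc C * 2 ^ k * G k + 2 ^ k * G k = (C + 1) * (2 ^ k * G k) := by ring
              _ ≤ (2 * ρ * C) * (2 ^ k * G k) :=
                mul_le_mul_of_nonneg_right hC1 (mul_nonneg hk2.le (hG0 k))
              _ = C * 2 ^ (k + 1) * (ρ * G k) := by ring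
              _ ≤ _ := mul_le_mul_of_nonneg_left (hstep k hk) (by positivity))
  refine ⟨C, ρ, G k₀, hCpos, by linarith, hpos k₀ le_rfl, fun p hp0 hpδ => ?_⟩
  have hex : ∃ k, G k ≤ p := ((hGlim.eventually_lt_const hp0).exists).imp fun _ h => h.le
  classical
  have hfind := Nat.find_spec hex
  have hlt : k₀ < Nat.find hex := by
    by_contra h
    have := hanti (not_lt.1 h)
    linarith
  obtain ⟨k, hk⟩ : ∃ k, Nat.find hex = k + 1 := ⟨Nat.find hex - 1, by omega⟩
  have hkp : p < G k := not_le.1 (Nat.find_min hex (by omega))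
  rw [hk] at hfind
  refine ⟨2 ^ (k + 1), by positivity, ?_, hfind, hmean (k + 1) (by omega)⟩
  exact (mul_le_mul_of_nonneg_left hkp.le (by linarith)).trans (hstep k (by omega))

/-- Markov bound for a large coordinate occurring together with a large sum of other coordinates. -/
lemma measure_pi_large_and_sum_large_le {ι κ : Type*} [Fintype ι] (ν : Measure ℝ)
    [IsProbabilityMeasure ν] (q : ι) (S : Finset κ) (f : κ → ι) (hf : ∀ k ∈ S, f k ≠ q)
    {t : ℝ} (ht : 0 < t) :
    (Measure.pi fun _ : ι => ν) {w | t ≤ w q ∧ t ≤ ∑ k ∈ S, w (f k)} ≤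
      S.card * (ν (Set.Ici t) * ∫⁻ x, ENNReal.ofReal (min x t) ∂ν) / ENNReal.ofReal t := by
  set μ : Measure (ι → ℝ) := Measure.pi fun _ : ι => ν
  let g : ℝ → ENNReal := (Set.Ici t).indicator 1
  let m : ℝ → ENNReal := fun x => ENNReal.ofReal (min x t)
  have hg : Measurable g := measurable_one.indicator measurableSet_Ici
  have hm : Measurable m := by fun_prop
  have hindep : iIndepFun (fun (i : ι) (w : ι → ℝ) => w i) μ :=
    iIndepFun_pi (X := fun _ x => x) (fun _ => aemeasurable_id)
  have hmap : ∀ (i : ι) (h : ℝ → ENNReal), Measurable h → ∫⁻ w, h (w i) ∂μ = ∫⁻ x, h x ∂ν :=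
    fun i h hh => (measurePreserving_eval (fun _ : ι => ν) i).lintegral_comp hh
  have hterm : ∀ k ∈ S, ∫⁻ w, g (w q) * m (w (f k)) ∂μ = ν (Set.Ici t) * ∫⁻ x, m x ∂ν := by
    intro k hk
    have h := lintegral_mul_eq_lintegral_mul_lintegral_of_indepFun (μ := μ)
      (f := fun w => g (w q)) (g := fun w => m (w (f k))) (hg.comp (measurable_pi_apply q))
      (hm.comp (measurable_pi_apply _)) ((hindep.indepFun (hf k hk).symm).comp hg hm)
    simp only [Pi.mul_apply] at h
    rw [h, hmap q g hg, hmap (f k) m hm]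
    simp [g, lintegral_indicator_one measurableSet_Ici]
  have hprod : ∀ k ∈ S, Measurable fun w : ι → ℝ => g (w q) * m (w (f k)) := fun k _ =>
    (hg.comp (measurable_pi_apply q)).mul (hm.comp (measurable_pi_apply (f k)))
  have hint : ∫⁻ w, ∑ k ∈ S, g (w q) * m (w (f k)) ∂μ =
      S.card * (ν (Set.Ici t) * ∫⁻ x, m x ∂ν) := by
    rw [lintegral_finsetSum _ hprod, sum_congr rfl hterm, sum_const, nsmul_eq_mul]
  rw [← hint]
  refine le_trans (measure_mono fun w hw => ?_) (meas_ge_le_lintegral_div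
    (Measurable.aemeasurable (Finset.measurable_fun_sum _ hprod))
    (by simpa using ht) ENNReal.ofReal_ne_top)
  obtain ⟨h1, h2⟩ := hw
  simp only [Set.mem_ofPred_eq, g, Set.indicator_of_mem (Set.mem_Ici.2 h1), Pi.one_apply, one_mul]
  by_cases hex : ∃ k ∈ S, t ≤ w (f k)
  · obtain ⟨k, hk, hkt⟩ := hex
    refine le_trans ?_ (single_le_sum (f := fun k => m (w (f k))) (fun _ _ => zero_le) hk)
    simp only [m, min_eq_right hkt, le_refl]
  · push Not at hex
    calc ENNReal.ofReal t ≤ ENNReal.ofReal (∑ k ∈ S, w (f k)) := ENNReal.ofReal_le_ofReal h2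
      _ ≤ ∑ k ∈ S, ENNReal.ofReal (w (f k)) := by
        exact le_sum_of_subadditive _ ENNReal.ofReal_zero.le
          (fun _ _ => ENNReal.ofReal_add_le) _ _
      _ = _ := sum_congr rfl fun k hk => by simp only [m, min_eq_left (hex k hk).le]

/-- Probability that all coordinates in a family of distinct indices stay below `t`. -/
lemma measure_pi_forall_lt_le {ι : Type*} [Fintype ι] (ν : Measure ℝ)
    [IsProbabilityMeasure ν] (S : Finset ι) (t : ℝ) :
    (Measure.pi fun _ : ι => ν) {w | ∀ q ∈ S, w q < t} ≤
      ENNReal.ofReal (Real.exp (-(S.card * ν.real (Set.Ici t)))) := by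
  classical
  have hset : {w : ι → ℝ | ∀ q ∈ S, w q < t} =
      Set.pi Set.univ fun q => if q ∈ S then Set.Iio t else Set.univ := by
    ext w
    simp only [Set.mem_ofPred_eq, Set.mem_pi, Set.mem_univ, true_implies]
    refine forall_congr' fun q => ?_
    by_cases h : q ∈ S <;> simp [h]
  have hIio : ν (Set.Iio t) ≤ ENNReal.ofReal (Real.exp (-ν.real (Set.Ici t))) := by
    have h := probReal_compl_eq_one_sub (μ := ν) (measurableSet_Ici (a := t))
    rw [Set.compl_Ici] at h
    rw [← ofReal_measureReal (μ := ν) (s := Set.Iio t), h]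
    refine ENNReal.ofReal_le_ofReal ?_
    linarith [Real.add_one_le_exp (-ν.real (Set.Ici t))]
  rw [hset, Measure.pi_pi]
  simp only [apply_ite ν, measure_univ]
  rw [prod_ite_mem, univ_inter, prod_const, ← mul_neg, Real.exp_nat_mul,
    ENNReal.ofReal_pow (Real.exp_pos _).le]
  gcongr

lemma JofReal_symm {N : ℕ} (w : CoupIdx N → ℝ) (i j : Fin N) :
    JofReal w i j = JofReal w j i := by
  unfold JofReal
  rcases lt_trichotomy i j with h | h | h
  · simp [h, h.not_gt]
  · simp [h]
  · simp [h, h.not_gt]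

lemma JofReal_nonneg {N : ℕ} {w : CoupIdx N → ℝ} (hw : ∀ q, 0 ≤ w q) (i j : Fin N) :
    0 ≤ JofReal w i j := by
  unfold JofReal
  split_ifs
  exacts [hw _, hw _, le_rfl]

/-- Off the diagonal, the coupling matrix reads off the coordinate of the unordered pair. -/
lemma exists_coupIdx {N : ℕ} {i j : Fin N} (hij : i ≠ j) :
    ∃ q : CoupIdx N, (∀ w : CoupIdx N → ℝ, JofReal w i j = w q) ∧
      (q.1 = (i, j) ∨ q.1 = (j, i)) := by
  rcases hij.lt_or_gt with h | h
  · exact ⟨⟨(i, j), h⟩, fun w => by simp [JofReal, h], Or.inl rfl⟩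
  · exact ⟨⟨(j, i), h⟩, fun w => by simp [JofReal, h, h.not_gt], Or.inr rfl⟩

/-- Probability that a large bond is beaten by the other bonds at one of its endpoints. -/
lemma measure_large_bond_and_large_row_le {N : ℕ} (ν : Measure ℝ) [IsProbabilityMeasure ν]
    {i j : Fin N} (hij : i ≠ j) {t : ℝ} (ht : 0 < t) :
    (Measure.pi fun _ : CoupIdx N => ν) {w | t ≤ JofReal w i j ∧
        t ≤ ∑ k ∈ (univ.erase i).erase j, JofReal w i k} ≤
      N * (ν (Set.Ici t) * ∫⁻ x, ENNReal.ofReal (min x t) ∂ν) / ENNReal.ofReal t := by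
  obtain ⟨q, hq, hq'⟩ := exists_coupIdx hij
  have hidx : ∀ k : Fin N, ∃ r : CoupIdx N, k ∈ (univ.erase i).erase j →
      (∀ w : CoupIdx N → ℝ, JofReal w i k = w r) ∧ r ≠ q := by
    intro k
    by_cases hk : k ∈ (univ.erase i).erase j
    · have hkj : k ≠ j := (mem_erase.1 hk).1
      have hki : k ≠ i := (mem_erase.1 (mem_erase.1 hk).2).1
      obtain ⟨r, hr, hr'⟩ := exists_coupIdx hki.symm
      refine ⟨r, fun _ => ⟨hr, ?_⟩⟩
      rintro rfl
      rcases hq' with h | h <;> rcases hr' with h' | h' <;> rw [h] at h' <;>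
        simp only [Prod.mk.injEq] at h' <;> grind
    · exact ⟨q, fun h => absurd h hk⟩
  choose f hf using hidx
  have hset : {w : CoupIdx N → ℝ | t ≤ JofReal w i j ∧
        t ≤ ∑ k ∈ (univ.erase i).erase j, JofReal w i k} =
      {w | t ≤ w q ∧ t ≤ ∑ k ∈ (univ.erase i).erase j, w (f k)} := by
    ext w
    simp only [Set.mem_ofPred_eq, hq, sum_congr rfl fun k hk => (hf k hk).1 w]
  rw [hset]
  refine (measure_pi_large_and_sum_large_le ν q _ f (fun k hk => (hf k hk).2) ht).trans ?_
  gcongr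
  simpa using card_le_univ ((univ.erase i).erase j)

/-- Probability that no bond between two consecutive blocks of `n` vertices is large. -/
lemma measure_block_lt_le {N : ℕ} (ν : Measure ℝ) [IsProbabilityMeasure ν] (s n : ℕ)
    (hs : s + 2 * n ≤ N) (t : ℝ) :
    (Measure.pi fun _ : CoupIdx N => ν) {w | ∀ i j : Fin N, s ≤ i → i < s + n →
        s + n ≤ j → j < s + 2 * n → JofReal w i j < t} ≤
      ENNReal.ofReal (Real.exp (-((n : ℝ) ^ 2 * ν.real (Set.Ici t)))) := by
  classical
  let f : Fin n × Fin n → CoupIdx N := fun x =>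
    ⟨(⟨s + x.1, by omega⟩, ⟨s + n + x.2, by omega⟩), by simp only [Fin.mk_lt_mk]; omega⟩
  have hf : Function.Injective f := by
    rintro ⟨a, b⟩ ⟨c, d⟩ h
    simp only [f, Subtype.mk.injEq, Prod.mk.injEq, Fin.mk.injEq] at h
    ext <;> simp only <;> omega
  have hcard : ((univ.image f).card : ℝ) = (n : ℝ) ^ 2 := by
    rw [card_image_of_injective _ hf]
    simp [sq]
  have h := measure_pi_forall_lt_le ν (univ.image f) t
  rw [hcard] at h
  refine (measure_mono fun w hw => ?_).trans h
  intro q hq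
  obtain ⟨x, -, rfl⟩ := mem_image.1 hq
  have := hw (f x).1.1 (f x).1.2 (by simp [f]) (by simp [f]) (by simp [f])
    (by simp only [f]; omega)
  rwa [JofReal, dif_pos (f x).2] at this

/-- A threshold at which both ends of a large bond carry small remaining rows gives a bully bond. -/
lemma isBullyBond_of_threshold {N : ℕ} (w : CoupIdx N → ℝ) {t : ℝ} {i j : Fin N} (hij : i ≠ j)
    (ht : t ≤ JofReal w i j)
    (hrow : ∀ i j : Fin N, i ≠ j → t ≤ JofReal w i j →
      ∑ k ∈ (univ.erase i).erase j, JofReal w i k < t) :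
    IsBullyBond (JofReal w) i j := by
  refine ⟨hij, (max_lt (hrow i j hij ht) ?_).trans_le ht⟩
  rw [erase_right_comm]
  exact hrow j i hij.symm (by rwa [JofReal_symm])

/-- Nonasymptotic bound on the probability that there is no nontrivial local minimum. -/
lemma measure_no_nontrivialLocalMin_le {N : ℕ} (ν : Measure ℝ) [IsProbabilityMeasure ν]
    (hnonneg : ν {x : ℝ | x < 0} = 0) (n : ℕ) (hn : 4 * n ≤ N) {t C : ℝ} (ht : 0 < t)
    (hC : 0 < C)
    (hmean : ∫⁻ x, ENNReal.ofReal (min x t) ∂ν ≤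
      ENNReal.ofReal (C * t * ν.real (Set.Ici t))) :
    (Measure.pi fun _ : CoupIdx N => ν)
        {w | ∃ σ : Fin N → ℤ, IsNontrivialLocalMin (JofReal w) σ}ᶜ ≤
      ENNReal.ofReal (2 * Real.exp (-((n : ℝ) ^ 2 * ν.real (Set.Ici t))) +
        C * ((N : ℝ) ^ 3 * ν.real (Set.Ici t) ^ 2)) := by
  set μ : Measure (CoupIdx N → ℝ) := Measure.pi fun _ : CoupIdx N => ν
  set F := ν.real (Set.Ici t) with hF
  have hF0 : 0 ≤ F := measureReal_nonneg
  let noBond : ℕ → Set (CoupIdx N → ℝ) := fun s => {w | ∀ i j : Fin N, s ≤ i → i < s + n →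
        s + n ≤ j → j < s + 2 * n → JofReal w i j < t}
  let bad : Fin N × Fin N → Set (CoupIdx N → ℝ) := fun x => {w | x.1 ≠ x.2 ∧
    (t ≤ JofReal w x.1 x.2 ∧ t ≤ ∑ k ∈ (univ.erase x.1).erase x.2, JofReal w x.1 k)}
  let neg : Set (CoupIdx N → ℝ) := ⋃ q, {w | w q < 0}
  have hcover : {w : CoupIdx N → ℝ | ∃ σ : Fin N → ℤ, IsNontrivialLocalMin (JofReal w) σ}ᶜ ⊆
      neg ∪ ((noBond 0 ∪ noBond (2 * n)) ∪ ⋃ x, bad x) := by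
    intro w hw
    by_contra hcon
    simp only [Set.mem_union, not_or, neg, bad, noBond, Set.mem_iUnion, Set.mem_ofPred_eq,
      not_exists, not_and, not_lt, not_le, not_forall, Prod.forall] at hcon
    obtain ⟨hpos, ⟨⟨a, b, -, ha, hb, hb', hab⟩, c, d, hc, hc', hd, hd', hcd⟩, hrow⟩ := hcon
    refine hw (exists_nontrivialLocalMin_of_bullyBonds (JofReal w) (JofReal_symm w)
      (JofReal_nonneg hpos) (isBullyBond_of_threshold w ?_ hab hrow)
      (isBullyBond_of_threshold w ?_ hcd hrow) ?_ ?_ ?_ ?_)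
    all_goals
      rintro rfl
      omega
  have hneg : μ neg = 0 := by
    refine measure_iUnion_null fun q => ?_
    have h := (measurePreserving_eval (fun _ : CoupIdx N => ν) q).measure_preimage
      (measurableSet_Iio (a := (0 : ℝ))).nullMeasurableSet
    exact h.trans hnonneg
  have hbad : ∀ x, μ (bad x) ≤ ENNReal.ofReal (C * (N * F ^ 2)) := by
    rintro ⟨i, j⟩
    by_cases hij : i = j
    · simp [bad, hij]
    · refine (measure_mono fun w hw => hw.2).trans
        ((measure_large_bond_and_large_row_le ν hij ht).trans ?_)
      calc N * (ν (Set.Ici t) * ∫⁻ x, ENNReal.ofReal (min x t) ∂ν) / ENNReal.ofReal t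
          ≤ ENNReal.ofReal N * (ENNReal.ofReal F * ENNReal.ofReal (C * t * F)) /
              ENNReal.ofReal t := by
            rw [ENNReal.ofReal_natCast, hF, ofReal_measureReal]
            gcongr
        _ = ENNReal.ofReal (C * (N * F ^ 2)) := by
            rw [← ENNReal.ofReal_mul hF0, ← ENNReal.ofReal_mul (by positivity),
              ← ENNReal.ofReal_div_of_pos ht]
            congr 1
            field_simp
  calc μ _ ≤ μ (neg ∪ ((noBond 0 ∪ noBond (2 * n)) ∪ ⋃ x, bad x)) := measure_mono hcover
    _ ≤ μ neg + ((μ (noBond 0) + μ (noBond (2 * n))) + ∑ x, μ (bad x)) :=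
        (measure_union_le _ _).trans (add_le_add le_rfl ((measure_union_le _ _).trans
          (add_le_add (measure_union_le _ _) (measure_iUnion_fintype_le _ _))))
    _ ≤ 0 + ((ENNReal.ofReal (Real.exp (-((n : ℝ) ^ 2 * F))) +
          ENNReal.ofReal (Real.exp (-((n : ℝ) ^ 2 * F)))) +
          ∑ _x : Fin N × Fin N, ENNReal.ofReal (C * (N * F ^ 2))) :=
        add_le_add hneg.le (add_le_add (add_le_add
          (measure_block_lt_le ν 0 n (by omega) t) (measure_block_lt_le ν (2 * n) n (by omega) t))
          (sum_le_sum fun x _ => hbad x))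
    _ = _ := by
        rw [zero_add, ← ENNReal.ofReal_add (by positivity) (by positivity), ← two_mul,
          ENNReal.ofReal_add (by positivity) (by positivity), sum_const, nsmul_eq_mul,
          ← ENNReal.ofReal_natCast, ← ENNReal.ofReal_mul (by positivity)]
        congr 2
        simp only [card_univ, Fintype.card_prod, Fintype.card_fin, Nat.cast_mul]
        ring

/-- for i.i.d. nonnegative heavy-tailed couplings with tail
`P(J ≥ x) = x^{-α} L(x)`, `0 < α < 1`, `L` slowly varying, with probability tending to `1`
as `N → ∞` the Hamiltonian has a nontrivial local minimum on `{±1}^N`. -/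
theorem heavy_tailed_has_nontrivial_local_min (α : ℝ) (hα0 : 0 < α) (hα1 : α < 1)
    (L : ℝ → ℝ) (hL : ∀ a : ℝ, 0 < a → Tendsto (fun x => L (a * x) / L x) atTop (nhds 1))
    (ν : Measure ℝ) [IsProbabilityMeasure ν]
    (hnonneg : ν {x : ℝ | x < 0} = 0)
    (htail : ∀ x : ℝ, 0 < x → (ν {y : ℝ | x ≤ y}).toReal = x ^ (-α) * L x) :
    Tendsto
      (fun N : ℕ => (Measure.pi fun _ : CoupIdx N => ν)
        {w : CoupIdx N → ℝ | ∃ σ : Fin N → ℤ, IsNontrivialLocalMin (JofReal w) σ})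
      atTop (nhds 1) := by
  obtain ⟨C, ρ, δ, hC, hρ, hδ, hthr⟩ :=
    exists_threshold α hα1 L (hL 2 two_pos) ν htail
  let p : ℕ → ℝ := fun N => (N : ℝ) ^ (-(7 / 4) : ℝ)
  let r : ℕ → ℝ := fun N =>
    2 * Real.exp (-(ρ / 64 * (N : ℝ) ^ (1 / 4 : ℝ))) + C * (N : ℝ) ^ (-(1 / 2) : ℝ)
  have hcast : Tendsto (fun N : ℕ => (N : ℝ)) atTop atTop := tendsto_natCast_atTop_atTop
  have hp : Tendsto p atTop (nhds 0) :=
    (tendsto_rpow_neg_atTop (by norm_num)).comp hcast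
  have hr : Tendsto r atTop (nhds 0) := by
    have h1 : Tendsto (fun N : ℕ => ρ / 64 * (N : ℝ) ^ (1 / 4 : ℝ)) atTop atTop :=
      ((tendsto_rpow_atTop (by norm_num)).comp hcast).const_mul_atTop (by positivity)
    have h2 : Tendsto (fun N : ℕ => (N : ℝ) ^ (-(1 / 2) : ℝ)) atTop (nhds 0) :=
      (tendsto_rpow_neg_atTop (by norm_num)).comp hcast
    simpa [r] using ((Real.tendsto_exp_neg_atTop_nhds_zero.comp h1).const_mul 2).add (h2.const_mul C)
  have hbound : ∀ᶠ N : ℕ in atTop, (Measure.pi fun _ : CoupIdx N => ν)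
      {w | ∃ σ : Fin N → ℤ, IsNontrivialLocalMin (JofReal w) σ}ᶜ ≤ ENNReal.ofReal (r N) := by
    filter_upwards [hp.eventually_lt_const hδ, eventually_ge_atTop 8] with N hNδ hN8
    have hN : (0 : ℝ) < N := by exact_mod_cast (by omega : 0 < N)
    obtain ⟨t, ht, hlow, hup, hmean⟩ := hthr (p N) (Real.rpow_pos_of_pos hN _) hNδ
    refine (measure_no_nontrivialLocalMin_le ν hnonneg (N / 4) (by omega) ht hC hmean).trans
      (ENNReal.ofReal_le_ofReal ?_)
    have hquot : (N : ℝ) / 8 ≤ ((N / 4 : ℕ) : ℝ) := by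
      rw [div_le_iff₀ (by norm_num)]
      exact_mod_cast (by omega : N ≤ N / 4 * 8)
    have hmany : ρ / 64 * (N : ℝ) ^ (1 / 4 : ℝ) ≤
        ((N / 4 : ℕ) : ℝ) ^ 2 * ν.real (Set.Ici t) := by
      calc ρ / 64 * (N : ℝ) ^ (1 / 4 : ℝ) = ((N : ℝ) / 8) ^ 2 * (ρ * p N) := by
            have : (N : ℝ) ^ (1 / 4 : ℝ) = (N : ℝ) ^ 2 * p N := by
              rw [← Real.rpow_natCast, ← Real.rpow_add hN]
              norm_num
            rw [this]
            ring
        _ ≤ _ := by gcongr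
    have hfew : (N : ℝ) ^ 3 * ν.real (Set.Ici t) ^ 2 ≤ (N : ℝ) ^ (-(1 / 2) : ℝ) := by
      calc (N : ℝ) ^ 3 * ν.real (Set.Ici t) ^ 2 ≤ (N : ℝ) ^ 3 * p N ^ 2 := by gcongr
        _ = (N : ℝ) ^ (-(1 / 2) : ℝ) := by
            rw [sq, ← Real.rpow_natCast, ← Real.rpow_add hN, ← Real.rpow_add hN]
            norm_num
    simp only [r]
    gcongr
  have hone : ∀ᶠ N : ℕ in atTop, 1 - ENNReal.ofReal (r N) ≤ (Measure.pi fun _ : CoupIdx N => ν)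
      {w | ∃ σ : Fin N → ℤ, IsNontrivialLocalMin (JofReal w) σ} := by
    filter_upwards [hbound] with N hN
    rw [tsub_le_iff_right, ← measure_univ (μ := Measure.pi fun _ : CoupIdx N => ν),
      ← Set.union_compl_self {w | ∃ σ : Fin N → ℤ, IsNontrivialLocalMin (JofReal w) σ}]
    exact (measure_union_le _ _).trans (add_le_add le_rfl hN)
  have hlim : Tendsto (fun N => 1 - ENNReal.ofReal (r N)) atTop (nhds 1) := by
    have h := ENNReal.Tendsto.sub (tendsto_const_nhds (x := (1 : ENNReal)))
      (ENNReal.tendsto_ofReal hr) (Or.inl ENNReal.one_ne_top)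
    simpa using h
  exact tendsto_of_tendsto_of_tendsto_of_le_of_le' hlim tendsto_const_nhds hone
    (Eventually.of_forall fun _ => prob_le_one)
end

section
/- Let {J_{ij} = J_{ji}}_{1≤i<j≤N} be any nonnegative real symmetric couplings and H(σ) = −(1/N) Σ_{1≤i<j≤N} J_{ij} σ_i σ_j. If there exist two bully bonds (i,j) and (k,l) with {i,j} ∩ {k,l} = ∅, then H has a nontrivial local minimum on {±1}^N: there exists σ ∈ {±1}^N with σ ∉ {(1,...,1), (−1,...,−1)} such that H(σ') ≥ H(σ) for every σ' at Hamming distance 1 from σ. -/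
open MeasureTheory ProbabilityTheory Filter Finset

/-- The energy cost of flipping the spin at `a`. -/
theorem Ham_update_neg_sub {N : ℕ} {J : Fin N → Fin N → ℝ} (hsym : ∀ i j, J i j = J j i)
    (σ : Fin N → ℤ) (a : Fin N) :
    Ham J (Function.update σ a (-σ a)) - Ham J σ =
      2 / (N : ℝ) * ∑ m ∈ univ.erase a, J a m * ((σ a : ℝ) * σ m) := by
  have hterm : ∀ x y : Fin N,
      (if x < y then J x y * (σ x : ℝ) * σ y -
        J x y * (Function.update σ a (-σ a) x : ℝ) * (Function.update σ a (-σ a) y : ℝ) else 0) =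
      (if x = a then (if a < y then 2 * (J a y * ((σ a : ℝ) * σ y)) else 0) else 0) +
      (if y = a then (if x < a then 2 * (J a x * ((σ a : ℝ) * σ x)) else 0) else 0) := by
    intro x y
    by_cases hx : x = a
    · subst hx
      by_cases hy : y = x
      · subst hy; simp
      · by_cases hxy : x < y
        · simp [hy, hxy]; ring
        · simp [hy, hxy]
    · by_cases hy : y = a
      · subst hy
        by_cases hxy : x < y
        · simp [hx, hxy, hsym y x]; ring
        · simp [hx, hxy]
      · simp [hx, hy]
  have hsum : ∑ q ∈ univ.filter (fun q : Fin N × Fin N => q.1 < q.2),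
      (J q.1 q.2 * (σ q.1 : ℝ) * σ q.2 - J q.1 q.2 * (Function.update σ a (-σ a) q.1 : ℝ) *
        (Function.update σ a (-σ a) q.2 : ℝ)) =
      2 * ∑ m ∈ univ.erase a, J a m * ((σ a : ℝ) * σ m) := by
    rw [sum_filter, Fintype.sum_prod_type]
    simp only [hterm, sum_add_distrib]
    rw [sum_comm]
    simp only [sum_ite_eq', mem_univ, if_true]
    rw [← sum_add_distrib, mul_sum, ← filter_ne', sum_filter]
    refine sum_congr rfl fun m _ => ?_
    rcases lt_trichotomy a m with h | h | h
    · simp [h, h.ne', h.not_gt]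
    · simp [h]
    · simp [h, h.ne, h.not_gt]
  rw [sum_sub_distrib] at hsum
  unfold Ham
  linear_combination (1 / (N : ℝ)) * hsum

theorem IsBullyBond.symm {N : ℕ} {J : Fin N → Fin N → ℝ} (hsym : ∀ i j, J i j = J j i)
    {i j : Fin N} (h : IsBullyBond J i j) : IsBullyBond J j i := by
  refine ⟨h.1.symm, ?_⟩
  rw [hsym j i, max_comm, erase_right_comm]
  exact h.2

/-- Flipping one end of an aligned bully bond does not decrease the energy. -/
theorem IsBullyBond.Ham_le_Ham_update_neg {N : ℕ} {J : Fin N → Fin N → ℝ}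
    (hsym : ∀ i j, J i j = J j i) (hnonneg : ∀ i j, 0 ≤ J i j) {i j : Fin N}
    (h : IsBullyBond J i j) {σ : Fin N → ℤ} (hσ : ∀ m, σ m = 1 ∨ σ m = -1) (hij : σ i = σ j) :
    Ham J σ ≤ Ham J (Function.update σ i (-σ i)) := by
  have hrest : -∑ m ∈ (univ.erase i).erase j, J i m ≤
      ∑ m ∈ (univ.erase i).erase j, J i m * ((σ i : ℝ) * σ m) := by
    rw [← sum_neg_distrib]
    refine sum_le_sum fun m _ => ?_
    have := hnonneg i m
    rcases hσ i with hi | hi <;> rcases hσ m with hm | hm <;> simp [hi, hm] <;> linarith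
  have hbond : J i j * ((σ i : ℝ) * σ j) = J i j := by
    rcases hσ j with hj | hj <;> simp [hij, hj]
  have hlt := (le_max_left _ _).trans_lt h.2
  have hfield : 0 ≤ ∑ m ∈ univ.erase i, J i m * ((σ i : ℝ) * σ m) := by
    rw [← add_sum_erase _ _ (mem_erase.2 ⟨h.1.symm, mem_univ j⟩), hbond]
    linarith
  rw [← sub_nonneg, Ham_update_neg_sub hsym]
  positivity

/-- two vertex-disjoint bully bonds force the existence of a nontrivial local
minimum of the Hamiltonian on the hypercube. -/
theorem two_disjoint_bully_bonds_give_nontrivial_local_min (N : ℕ) (J : Fin N → Fin N → ℝ)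
    (hsym : ∀ i j, J i j = J j i) (hnonneg : ∀ i j, 0 ≤ J i j)
    (i j k l : Fin N) (hb1 : IsBullyBond J i j) (hb2 : IsBullyBond J k l)
    (hdisj : ({i, j} : Set (Fin N)) ∩ {k, l} = ∅) :
    ∃ σ : Fin N → ℤ, IsNontrivialLocalMin J σ := by
  have hne : ∀ a ∈ ({i, j} : Set (Fin N)), ∀ b ∈ ({k, l} : Set (Fin N)), a ≠ b :=
    fun a ha b hb hab => Set.disjoint_left.1 (Set.disjoint_iff_inter_eq_empty.2 hdisj) ha (hab ▸ hb)
  have hik : i ≠ k := hne _ (by simp) _ (by simp)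
  have hil : i ≠ l := hne _ (by simp) _ (by simp)
  have hjk : j ≠ k := hne _ (by simp) _ (by simp)
  have hjl : j ≠ l := hne _ (by simp) _ (by simp)
  let S : Set (Fin N → ℤ) :=
    {σ | (∀ m, σ m = 1 ∨ σ m = -1) ∧ σ i = 1 ∧ σ j = 1 ∧ σ k = -1 ∧ σ l = -1}
  have hfin : S.Finite :=
    (Set.Finite.pi' fun _ : Fin N => Set.toFinite ({1, -1} : Set ℤ)).subset fun σ hσ m => hσ.1 m
  have hS : S.Nonempty := by
    refine ⟨fun m => if m = i ∨ m = j then 1 else -1, fun m => ?_, ?_⟩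
    · dsimp only
      split_ifs <;> simp
    · simp [hik.symm, hil.symm, hjk.symm, hjl.symm]
  obtain ⟨σ, ⟨hσ, hi, hj, hk, hl⟩, hmin⟩ := Set.exists_min_image S (Ham J) hfin hS
  refine ⟨σ, hσ, fun h => ?_, fun h => ?_, fun m => ?_⟩
  · simp [h] at hk
  · simp [h] at hi
  by_cases hmi : m = i
  · exact hmi ▸ hb1.Ham_le_Ham_update_neg hsym hnonneg hσ (hi.trans hj.symm)
  by_cases hmj : m = j
  · exact hmj ▸ (hb1.symm hsym).Ham_le_Ham_update_neg hsym hnonneg hσ (hj.trans hi.symm)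
  by_cases hmk : m = k
  · exact hmk ▸ hb2.Ham_le_Ham_update_neg hsym hnonneg hσ (hk.trans hl.symm)
  by_cases hml : m = l
  · exact hml ▸ (hb2.symm hsym).Ham_le_Ham_update_neg hsym hnonneg hσ (hl.trans hk.symm)
  refine hmin _ ⟨fun n => ?_, ?_⟩
  · by_cases hn : n = m
    · subst hn
      rcases hσ n with h | h <;> simp [h]
    · simpa [hn] using hσ n
  · simp [Ne.symm hmi, Ne.symm hmj, Ne.symm hmk, Ne.symm hml, hi, hj, hk, hl]
end

section
/- Let {J_{ij}} be i.i.d. nonnegative random variables with P(J_{12} ≥ x) = x^{−α} L(x) for some 0 < α < 1 and slowly varying L. Then with probability tending to 1 as N → ∞, the pair (i,j) with 1 ≤ i < j ≤ ⌊N/2⌋ maximizing J_{ij} is a bully bond; in particular, with probability tending to 1 there exists at least one bully bond with both endpoints in {1,...,⌊N/2⌋}. -/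
open MeasureTheory ProbabilityTheory Filter Finset

/-- The mean of the positive part of a `ν`-distributed variable truncated at level `t`. -/
noncomputable def truncMean (ν : Measure ℝ) (t : ℝ) : ENNReal :=
  ∫⁻ x, ENNReal.ofReal (min x t) ∂ν

lemma measurable_ofReal_min (t : ℝ) : Measurable fun x : ℝ => ENNReal.ofReal (min x t) := by
  fun_prop

lemma truncMean_le (ν : Measure ℝ) [IsProbabilityMeasure ν] (t : ℝ) :
    truncMean ν t ≤ ENNReal.ofReal t := by
  calc truncMean ν t ≤ ∫⁻ _, ENNReal.ofReal t ∂ν :=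
        lintegral_mono fun x => ENNReal.ofReal_le_ofReal (min_le_right _ _)
    _ = ENNReal.ofReal t := by simp

lemma truncMean_two_mul_le (ν : Measure ℝ) {t : ℝ} (ht : 0 < t) :
    truncMean ν (2 * t) ≤ truncMean ν t + ENNReal.ofReal t * ν (Set.Ici t) := by
  rw [truncMean, truncMean, ← lintegral_indicator_const measurableSet_Ici,
    ← lintegral_add_left (measurable_ofReal_min t)]
  refine lintegral_mono fun x => ?_
  by_cases hx : t ≤ x
  · simp only [Set.indicator_of_mem (Set.mem_Ici.2 hx)]
    rw [← ENNReal.ofReal_add (by simp [ht.le, ht.le.trans hx]) ht.le]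
    refine ENNReal.ofReal_le_ofReal ?_
    rw [min_eq_right hx]
    linarith [min_le_right x (2 * t)]
  · push Not at hx
    rw [Set.indicator_of_notMem (by simpa using hx), add_zero, min_eq_left hx.le]
    exact ENNReal.ofReal_le_ofReal (min_le_left _ _)

/-- A dyadic Karamata estimate: if the tail decays at most geometrically with ratio larger than
`1 / 2` along `t₀ * 2 ^ n`, the truncated mean at level `t` is of order `t * ν [t, ∞)`. -/
lemma exists_truncMean_le (ν : Measure ℝ) [IsProbabilityMeasure ν] {t₀ q : ℝ} (ht₀ : 0 < t₀)
    (hq : 1 / 2 < q) (hpos : 0 < ν.real (Set.Ici t₀))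
    (hdec : ∀ x, t₀ ≤ x → q * ν.real (Set.Ici x) ≤ ν.real (Set.Ici (2 * x))) :
    ∃ C : ℝ, 0 < C ∧ ∀ n : ℕ, truncMean ν (t₀ * 2 ^ n) ≤
      ENNReal.ofReal (C * (t₀ * 2 ^ n) * ν.real (Set.Ici (t₀ * 2 ^ n))) := by
  have hq' : 0 < 2 * q - 1 := by linarith
  set C := 1 / ν.real (Set.Ici t₀) + 1 / (2 * q - 1) with hC
  have hCpos : 0 < C := by positivity
  have hC₁ : 1 ≤ C * ν.real (Set.Ici t₀) := by
    rw [hC, add_mul, div_mul_cancel₀ _ hpos.ne']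
    have : 0 ≤ 1 / (2 * q - 1) * ν.real (Set.Ici t₀) := by positivity
    linarith
  have hC₂ : 1 ≤ C * (2 * q - 1) := by
    rw [hC, add_mul, div_mul_cancel₀ _ hq'.ne']
    have : 0 ≤ 1 / ν.real (Set.Ici t₀) * (2 * q - 1) := by positivity
    linarith
  refine ⟨C, hCpos, fun n => ?_⟩
  induction n with
  | zero =>
    refine (truncMean_le ν _).trans (ENNReal.ofReal_le_ofReal ?_)
    simp only [pow_zero, mul_one]
    nlinarith
  | succ n ih =>
    set t := t₀ * 2 ^ n with ht
    have ht₀t : t₀ ≤ t := le_mul_of_one_le_right ht₀.le (one_le_pow₀ (by norm_num))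
    have htpos : 0 < t := ht₀.trans_le ht₀t
    have hg : 0 ≤ ν.real (Set.Ici t) := measureReal_nonneg
    have hstep := hdec t ht₀t
    rw [show t₀ * 2 ^ (n + 1) = 2 * t by rw [ht]; ring]
    refine (truncMean_two_mul_le ν htpos).trans ((add_le_add_left ih _).trans ?_)
    rw [← ofReal_measureReal, ← ENNReal.ofReal_mul htpos.le,
      ← ENNReal.ofReal_add (by positivity) (by positivity)]
    refine ENNReal.ofReal_le_ofReal ?_
    have h₁ : C * (2 * t) * (q * ν.real (Set.Ici t)) ≤ C * (2 * t) * ν.real (Set.Ici (2 * t)) :=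
      mul_le_mul_of_nonneg_left hstep (by positivity)
    have h₂ : 1 * (t * ν.real (Set.Ici t)) ≤ C * (2 * q - 1) * (t * ν.real (Set.Ici t)) :=
      mul_le_mul_of_nonneg_right hC₂ (by positivity)
    linarith

/-- A sequence tending to zero whose consecutive ratios are at least `1 / 2` comes within a
factor two of every small positive level. -/
lemma exists_half_le_and_le {g : ℕ → ℝ} (hg : Tendsto g atTop (nhds 0))
    (hdec : ∀ n, g n / 2 ≤ g (n + 1)) {a : ℝ} (ha : 0 < a) (ha₀ : a < g 0) :
    ∃ n, a / 2 ≤ g n ∧ g n ≤ a := by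
  classical
  have hex : ∃ n, g n ≤ a := (hg.eventually (eventually_le_nhds ha)).exists
  refine ⟨Nat.find hex, ?_, Nat.find_spec hex⟩
  obtain ⟨m, hm⟩ : ∃ m, Nat.find hex = m + 1 :=
    Nat.exists_eq_succ_of_ne_zero fun h => by
      have := Nat.find_spec hex
      rw [h] at this
      linarith
  have hlt : a < g m := not_le.1 (Nat.find_min hex (by omega))
  rw [hm]
  linarith [hdec m]

lemma ofReal_le_sum_ofReal_min {ι : Type*} (s : Finset ι) (f : ι → ℝ) {t : ℝ}
    (h : t ≤ ∑ k ∈ s, f k) :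
    ENNReal.ofReal t ≤ ∑ k ∈ s, ENNReal.ofReal (min (f k) t) := by
  by_cases hbig : ∃ k ∈ s, t ≤ f k
  · obtain ⟨k, hk, hkt⟩ := hbig
    refine le_trans (le_of_eq ?_)
      (Finset.single_le_sum (f := fun k => ENNReal.ofReal (min (f k) t)) (by simp) hk)
    simp [min_eq_right hkt]
  · push Not at hbig
    rw [Finset.sum_congr rfl fun k hk => by rw [min_eq_left (hbig k hk).le]]
    exact (ENNReal.ofReal_le_ofReal h).trans
      (Finset.le_sum_of_subadditive ENNReal.ofReal ENNReal.ofReal_zero.le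
        (fun _ _ => ENNReal.ofReal_add_le) s f)

/-- A union-bound form of Markov's inequality: a coordinate exceeding `t` is unlikely to be
dominated by a sum of other coordinates. -/
lemma ofReal_mul_pi_le {ι κ : Type*} [Fintype ι] (ν : Measure ℝ) [IsProbabilityMeasure ν]
    (t : ℝ) (q : ι) (s : Finset κ) (p : κ → ι) (hp : ∀ k ∈ s, p k ≠ q) :
    ENNReal.ofReal t * (Measure.pi fun _ : ι => ν)
        {w | t ≤ w q ∧ w q ≤ ∑ k ∈ s, w (p k)} ≤
      s.card * (ν (Set.Ici t) * truncMean ν t) := by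
  set μ := Measure.pi fun _ : ι => ν
  let u : ℝ → ENNReal := (Set.Ici t).indicator fun _ => 1
  let v : ℝ → ENNReal := fun x => ENNReal.ofReal (min x t)
  have hu : Measurable u := measurable_const.indicator measurableSet_Ici
  have hv : Measurable v := measurable_ofReal_min t
  have hprod : ∀ k ∈ s, ∫⁻ w, u (w q) * v (w (p k)) ∂μ = ν (Set.Ici t) * truncMean ν t := by
    intro k hk
    have hind : IndepFun (fun w : ι → ℝ => w q) (fun w : ι → ℝ => w (p k)) μ :=
      (iIndepFun_pi (X := fun _ : ι => (id : ℝ → ℝ)) fun _ => aemeasurable_id).indepFun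
        (hp k hk).symm
    have := lintegral_mul_eq_lintegral_mul_lintegral_of_indepFun
      (hu.comp (measurable_pi_apply q)) (hv.comp (measurable_pi_apply (p k))) (hind.comp hu hv)
    refine this.trans ?_
    have hq := (measurePreserving_eval (fun _ : ι => ν) q).lintegral_comp hu
    have hk' := (measurePreserving_eval (fun _ : ι => ν) (p k)).lintegral_comp hv
    simp only [Function.comp_def]
    simp only [Function.eval] at hq hk'
    rw [hq, hk', lintegral_indicator_const measurableSet_Ici, one_mul]
    rfl
  calc ENNReal.ofReal t * μ {w | t ≤ w q ∧ w q ≤ ∑ k ∈ s, w (p k)}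
      ≤ ENNReal.ofReal t * μ {w | ENNReal.ofReal t ≤ ∑ k ∈ s, u (w q) * v (w (p k))} := by
        gcongr with w
        rintro ⟨h₁, h₂⟩
        have : u (w q) = 1 := Set.indicator_of_mem (Set.mem_Ici.2 h₁) _
        simpa only [this, one_mul] using ofReal_le_sum_ofReal_min s _ (h₁.trans h₂)
    _ ≤ ∫⁻ w, ∑ k ∈ s, u (w q) * v (w (p k)) ∂μ :=
        mul_meas_ge_le_lintegral (by fun_prop) _
    _ = s.card * (ν (Set.Ici t) * truncMean ν t) := by
        rw [lintegral_finsetSum _ (by fun_prop), Finset.sum_congr rfl hprod, Finset.sum_const,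
          nsmul_eq_mul]

lemma JofReal_of_lt {N : ℕ} (w : CoupIdx N → ℝ) {i j : Fin N} (h : i < j) :
    JofReal w i j = w ⟨(i, j), h⟩ := dif_pos h

lemma exists_JofReal_eq_apply {N : ℕ} {i j x k : Fin N} (hij : i < j) (hx : x = i ∨ x = j)
    (hk : k ∈ (Finset.univ.erase i).erase j) :
    ∃ q : CoupIdx N, q ≠ ⟨(i, j), hij⟩ ∧ ∀ w : CoupIdx N → ℝ, JofReal w x k = w q := by
  simp only [Finset.mem_erase, Finset.mem_univ, and_true] at hk
  have hxk : x ≠ k := by rcases hx with rfl | rfl <;> tauto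
  rcases hxk.lt_or_gt with h | h
  · refine ⟨⟨(x, k), h⟩, ?_, fun w => dif_pos h⟩
    simp only [ne_eq, Subtype.mk.injEq, Prod.mk.injEq]
    tauto
  · refine ⟨⟨(k, x), h⟩, ?_, fun w => by rw [JofReal, dif_neg h.not_gt, dif_pos h]⟩
    simp only [ne_eq, Subtype.mk.injEq, Prod.mk.injEq]
    tauto

/-- The probability that a given coupling exceeds `t` without dominating the other couplings at
one of its endpoints. -/
lemma pi_le_and_le_sum_le {N : ℕ} (ν : Measure ℝ) [IsProbabilityMeasure ν] {t C : ℝ} (ht : 0 < t)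
    (hM : truncMean ν t ≤ ENNReal.ofReal (C * t * ν.real (Set.Ici t)))
    {i j x : Fin N} (hij : i < j) (hx : x = i ∨ x = j) :
    (Measure.pi fun _ : CoupIdx N => ν)
        {w | t ≤ JofReal w i j ∧
          JofReal w i j ≤ ∑ k ∈ (Finset.univ.erase i).erase j, JofReal w x k} ≤
      ENNReal.ofReal (N * C * ν.real (Set.Ici t) ^ 2) := by
  set s : Finset (Fin N) := (Finset.univ.erase i).erase j
  have hex : ∀ k, ∃ q : CoupIdx N, k ∈ s →
      q ≠ ⟨(i, j), hij⟩ ∧ ∀ w : CoupIdx N → ℝ, JofReal w x k = w q := fun k => by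
    by_cases hk : k ∈ s
    · obtain ⟨q, hq⟩ := exists_JofReal_eq_apply hij hx hk
      exact ⟨q, fun _ => hq⟩
    · exact ⟨⟨(i, j), hij⟩, fun h => absurd h hk⟩
  choose p hp using hex
  have hset : {w : CoupIdx N → ℝ | t ≤ JofReal w i j ∧ JofReal w i j ≤ ∑ k ∈ s, JofReal w x k} =
      {w | t ≤ w ⟨(i, j), hij⟩ ∧ w ⟨(i, j), hij⟩ ≤ ∑ k ∈ s, w (p k)} := by
    ext w
    rw [Set.mem_ofPred_eq, Set.mem_ofPred_eq, JofReal_of_lt w hij,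
      Finset.sum_congr rfl fun k hk => (hp k hk).2 w]
  have ht' : ENNReal.ofReal t ≠ 0 := by simpa using ht
  rw [hset, ← ENNReal.mul_le_mul_iff_right ht' ENNReal.ofReal_ne_top]
  refine (ofReal_mul_pi_le ν t _ s p fun k hk => (hp k hk).1).trans ?_
  have hcard : (s.card : ENNReal) ≤ N := by
    exact_mod_cast (Finset.card_le_univ s).trans_eq (Fintype.card_fin N)
  calc (s.card : ENNReal) * (ν (Set.Ici t) * truncMean ν t)
      ≤ N * (ENNReal.ofReal (ν.real (Set.Ici t)) *
          ENNReal.ofReal (C * t * ν.real (Set.Ici t))) := by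
        rw [ofReal_measureReal]
        gcongr
    _ = ENNReal.ofReal t * ENNReal.ofReal (N * C * ν.real (Set.Ici t) ^ 2) := by
        rw [← ENNReal.ofReal_natCast, ← ENNReal.ofReal_mul measureReal_nonneg,
          ← ENNReal.ofReal_mul (by positivity), ← ENNReal.ofReal_mul ht.le]
        congr 1
        ring

/-- The probability that all couplings within the first half of the vertices are below `t`. -/
lemma pi_forall_lt_le (N : ℕ) (ν : Measure ℝ) [IsProbabilityMeasure ν] (t : ℝ) :
    (Measure.pi fun _ : CoupIdx N => ν)
        {w | ∀ i j : Fin N, i < j → (j : ℕ) < N / 2 → JofReal w i j < t} ≤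
      ENNReal.ofReal (Real.exp (-(ν.real (Set.Ici t) * ((N / 4 : ℕ) : ℝ) ^ 2))) := by
  classical
  let e : Fin (N / 4) × Fin (N / 4) → CoupIdx N := fun a =>
    ⟨(⟨a.1, by omega⟩, ⟨N / 4 + a.2, by omega⟩), by
      simp only [Fin.mk_lt_mk]; omega⟩
  have he : Function.Injective e := by
    rintro ⟨a, b⟩ ⟨c, d⟩ h
    simp only [e, Subtype.mk.injEq, Prod.mk.injEq, Fin.mk.injEq] at h
    ext <;> simp <;> omega
  let T : Finset (CoupIdx N) := Finset.univ.image e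
  have hT : T.card = (N / 4) ^ 2 := by
    simp [T, Finset.card_image_of_injective _ he, sq]
  have hsub : {w : CoupIdx N → ℝ | ∀ i j : Fin N, i < j → (j : ℕ) < N / 2 → JofReal w i j < t} ⊆
      Set.univ.pi fun q => if q ∈ T then Set.Iio t else Set.univ := by
    intro w hw q _
    dsimp only
    split_ifs with hq
    · obtain ⟨a, -, rfl⟩ := Finset.mem_image.1 hq
      have := hw (e a).1.1 (e a).1.2 (e a).2 (by simp only [e]; omega)
      rwa [JofReal_of_lt w (e a).2] at this
    · trivial
  have hIio : ν (Set.Iio t) = ENNReal.ofReal (1 - ν.real (Set.Ici t)) := by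
    rw [← ofReal_measureReal, ← Set.compl_Ici, probReal_compl_eq_one_sub measurableSet_Ici]
  have hle : ν.real (Set.Ici t) ≤ 1 := measureReal_le_one
  refine (measure_mono hsub).trans ?_
  rw [Measure.pi_pi]
  simp only [apply_ite ν, measure_univ, Finset.prod_ite_mem, Finset.univ_inter,
    Finset.prod_const, hT, hIio]
  rw [← ENNReal.ofReal_pow (by linarith)]
  refine ENNReal.ofReal_le_ofReal ?_
  calc (1 - ν.real (Set.Ici t)) ^ ((N / 4) ^ 2)
      ≤ Real.exp (-ν.real (Set.Ici t)) ^ ((N / 4) ^ 2) :=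
        pow_le_pow_left₀ (by linarith) (Real.one_sub_le_exp_neg _) _
    _ = _ := by
        rw [← Real.exp_nat_mul]
        congr 1
        push_cast
        ring

/-- If some coupling within the first half reaches `t`, and no coupling reaching `t` fails to
dominate the other couplings at its endpoints, then the maximal couplings are bully bonds. -/
lemma max_isBullyBond_of_dominating {N : ℕ} {J : Fin N → Fin N → ℝ} {t : ℝ}
    (hbig : ∃ i j : Fin N, i < j ∧ (j : ℕ) < N / 2 ∧ t ≤ J i j)
    (hdom : ∀ i j x : Fin N, i < j → x = i ∨ x = j → t ≤ J i j →
      ∑ k ∈ (Finset.univ.erase i).erase j, J x k < J i j) :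
    (∀ i j : Fin N, i < j → (j : ℕ) < N / 2 →
        (∀ k l : Fin N, k < l → (l : ℕ) < N / 2 → J k l ≤ J i j) → IsBullyBond J i j) ∧
      ∃ i j : Fin N, i < j ∧ (j : ℕ) < N / 2 ∧ IsBullyBond J i j := by
  obtain ⟨i₀, j₀, h₀, hj₀, ht₀⟩ := hbig
  have hbully : ∀ i j : Fin N, i < j → (j : ℕ) < N / 2 → t ≤ J i j → IsBullyBond J i j :=
    fun i j hij _ ht => ⟨hij.ne, max_lt (hdom i j i hij (.inl rfl) ht)
      (hdom i j j hij (.inr rfl) ht)⟩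
  exact ⟨fun i j hij hj hmax => hbully i j hij hj (ht₀.trans (hmax i₀ j₀ h₀ hj₀)),
    i₀, j₀, h₀, hj₀, hbully i₀ j₀ h₀ hj₀ ht₀⟩

/-- The event that the maximal couplings within the first half are bully bonds. -/
abbrev maxBullyEvent (N : ℕ) : Set (CoupIdx N → ℝ) :=
  {w : CoupIdx N → ℝ |
    (∀ i j : Fin N, i < j → (j : ℕ) < N / 2 →
      (∀ k l : Fin N, k < l → (l : ℕ) < N / 2 → JofReal w k l ≤ JofReal w i j) →
      IsBullyBond (JofReal w) i j) ∧
    ∃ i j : Fin N, i < j ∧ (j : ℕ) < N / 2 ∧ IsBullyBond (JofReal w) i j}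

lemma pi_compl_maxBullyEvent_le (N : ℕ) (ν : Measure ℝ) [IsProbabilityMeasure ν] {t C : ℝ}
    (ht : 0 < t) (hC : 0 < C) (hM : truncMean ν t ≤ ENNReal.ofReal (C * t * ν.real (Set.Ici t))) :
    (Measure.pi fun _ : CoupIdx N => ν) (maxBullyEvent N)ᶜ ≤
      ENNReal.ofReal (Real.exp (-(ν.real (Set.Ici t) * ((N / 4 : ℕ) : ℝ) ^ 2)) +
        2 * C * N ^ 3 * ν.real (Set.Ici t) ^ 2) := by
  set μ := Measure.pi fun _ : CoupIdx N => ν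
  let B : Fin N × Fin N × Bool → Set (CoupIdx N → ℝ) := fun a =>
    {w | a.1 < a.2.1 ∧ t ≤ JofReal w a.1 a.2.1 ∧ JofReal w a.1 a.2.1 ≤
      ∑ k ∈ (Finset.univ.erase a.1).erase a.2.1, JofReal w (if a.2.2 then a.1 else a.2.1) k}
  have hB : ∀ a, μ (B a) ≤ ENNReal.ofReal (N * C * ν.real (Set.Ici t) ^ 2) := by
    rintro ⟨i, j, b⟩
    by_cases hij : i < j
    · simp only [B, hij, true_and]
      exact pi_le_and_le_sum_le ν ht hM hij (by cases b <;> simp)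
    · simp [B, hij]
  have hsub : (maxBullyEvent N)ᶜ ⊆
      {w | ∀ i j : Fin N, i < j → (j : ℕ) < N / 2 → JofReal w i j < t} ∪ ⋃ a, B a := by
    intro w hw
    by_contra hcon
    simp only [Set.mem_union, Set.mem_iUnion, not_or, not_exists] at hcon
    obtain ⟨hbig, hdom⟩ := hcon
    refine hw (max_isBullyBond_of_dominating (t := t) (by simpa using hbig) ?_)
    rintro i j x hij hx hle
    by_contra! hge
    rcases hx with rfl | rfl
    · exact hdom (x, j, true) ⟨hij, hle, by simpa using hge⟩
    · exact hdom (i, x, false) ⟨hij, hle, by simpa using hge⟩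
  have hU : μ (⋃ a, B a) ≤ ENNReal.ofReal (2 * C * N ^ 3 * ν.real (Set.Ici t) ^ 2) := by
    refine (measure_iUnion_fintype_le μ B).trans ((Finset.sum_le_sum fun a _ => hB a).trans ?_)
    rw [Finset.sum_const, nsmul_eq_mul, ← ENNReal.ofReal_natCast,
      ← ENNReal.ofReal_mul (by positivity)]
    refine ENNReal.ofReal_le_ofReal (le_of_eq ?_)
    simp
    ring
  refine (measure_mono hsub).trans ((measure_union_le _ _).trans ?_)
  rw [ENNReal.ofReal_add (by positivity) (by positivity)]
  exact add_le_add (pi_forall_lt_le N ν t) hU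

/-- Regular variation of the tail: eventually doubling the argument shrinks the tail by a
factor at least `q > 1 / 2`. -/
lemma exists_doubling_tail {α : ℝ} (hα1 : α < 1) {L : ℝ → ℝ}
    (hL : Tendsto (fun x => L (2 * x) / L x) atTop (nhds 1)) (ν : Measure ℝ)
    (htail : ∀ x : ℝ, 0 < x → ν.real (Set.Ici x) = x ^ (-α) * L x) :
    ∃ q t₀ : ℝ, 1 / 2 < q ∧ 0 < t₀ ∧ 0 < ν.real (Set.Ici t₀) ∧
      ∀ x, t₀ ≤ x → q * ν.real (Set.Ici x) ≤ ν.real (Set.Ici (2 * x)) := by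
  have h2 : (1 / 2 : ℝ) < 2 ^ (-α) := by
    rw [one_div, ← Real.rpow_neg_one]
    exact Real.rpow_lt_rpow_of_exponent_lt (by norm_num) (by linarith)
  obtain ⟨q, hq, hq'⟩ := exists_between h2
  have hlim : Tendsto (fun x => (2 : ℝ) ^ (-α) * (L (2 * x) / L x)) atTop (nhds (2 ^ (-α))) := by
    simpa using hL.const_mul ((2 : ℝ) ^ (-α))
  obtain ⟨t₀, ht₀⟩ := eventually_atTop.1
    ((hlim.eventually (lt_mem_nhds hq')).and (eventually_gt_atTop 0))
  have hpos : ∀ x, t₀ ≤ x → 0 < ν.real (Set.Ici x) := fun x hx => by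
    refine measureReal_nonneg.lt_of_ne' fun h => ?_
    have hLx : L x = 0 := by
      rw [htail x (ht₀ x hx).2] at h
      exact (mul_eq_zero.1 h).resolve_left (Real.rpow_pos_of_pos (ht₀ x hx).2 _).ne'
    have := (ht₀ x hx).1
    rw [hLx] at this
    simp at this
    linarith
  refine ⟨q, t₀, hq, (ht₀ t₀ le_rfl).2, hpos t₀ le_rfl, fun x hx => ?_⟩
  obtain ⟨hxq, hx0⟩ := ht₀ x hx
  have hg := hpos x hx
  have hxα := Real.rpow_pos_of_pos hx0 (-α)
  rw [htail x hx0] at hg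
  have hLx : 0 < L x := pos_of_mul_pos_right hg hxα.le
  rw [htail x hx0, htail (2 * x) (by positivity), Real.mul_rpow (by norm_num) hx0.le]
  calc q * (x ^ (-α) * L x) ≤ (2 ^ (-α) * (L (2 * x) / L x)) * (x ^ (-α) * L x) :=
        mul_le_mul_of_nonneg_right hxq.le hg.le
    _ = 2 ^ (-α) * x ^ (-α) * L (2 * x) := by field_simp

lemma tendsto_measureReal_Ici_atTop (ν : Measure ℝ) [IsFiniteMeasure ν] :
    Tendsto (fun x => ν.real (Set.Ici x)) atTop (nhds 0) := by
  have h : Tendsto (fun x => ν (Set.Ici x)) atTop (nhds (ν (⋂ x : ℝ, Set.Ici x))) :=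
    tendsto_measure_iInter_atTop (fun x => measurableSet_Ici.nullMeasurableSet)
      (fun _ _ hxy => Set.Ici_subset_Ici.2 hxy) ⟨0, measure_ne_top _ _⟩
  have hemp : (⋂ x : ℝ, Set.Ici x) = ∅ := by
    refine Set.eq_empty_iff_forall_notMem.2 fun y hy => ?_
    have := Set.mem_iInter.1 hy (y + 1)
    simp at this
    linarith
  rw [hemp, measure_empty] at h
  simpa [Measure.real, Function.comp_def] using (ENNReal.tendsto_toReal ENNReal.zero_ne_top).comp h

lemma tendsto_exp_add_rpow (C : ℝ) :
    Tendsto (fun N : ℕ => Real.exp (-((N : ℝ) ^ (1 / 4 : ℝ) / 128)) +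
      2 * C * (N : ℝ) ^ (-(1 / 2) : ℝ)) atTop (nhds 0) := by
  have h₁ : Tendsto (fun N : ℕ => (N : ℝ) ^ (1 / 4 : ℝ) / 128) atTop atTop :=
    ((tendsto_rpow_atTop (by norm_num)).comp tendsto_natCast_atTop_atTop).atTop_div_const
      (by norm_num)
  have h₂ : Tendsto (fun N : ℕ => (N : ℝ) ^ (-(1 / 2) : ℝ)) atTop (nhds 0) :=
    (tendsto_rpow_neg_atTop (by norm_num)).comp tendsto_natCast_atTop_atTop
  simpa using (Real.tendsto_exp_neg_atTop_nhds_zero.comp h₁).add (h₂.const_mul (2 * C))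

lemma exp_add_le_of_level {N : ℕ} (hN : 8 ≤ N) {C g : ℝ} (hC : 0 < C)
    (hlow : (N : ℝ) ^ (-(7 / 4) : ℝ) / 2 ≤ g) (hup : g ≤ (N : ℝ) ^ (-(7 / 4) : ℝ)) :
    Real.exp (-(g * ((N / 4 : ℕ) : ℝ) ^ 2)) + 2 * C * N ^ 3 * g ^ 2 ≤
      Real.exp (-((N : ℝ) ^ (1 / 4 : ℝ) / 128)) + 2 * C * (N : ℝ) ^ (-(1 / 2) : ℝ) := by
  have hN0 : (0 : ℝ) < N := by exact_mod_cast (by omega : 0 < N)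
  have hquarter : (N : ℝ) / 8 ≤ ((N / 4 : ℕ) : ℝ) := by
    have : N ≤ 8 * (N / 4) := by omega
    have : (N : ℝ) ≤ 8 * ((N / 4 : ℕ) : ℝ) := by exact_mod_cast this
    linarith
  have ha : 0 < (N : ℝ) ^ (-(7 / 4) : ℝ) := Real.rpow_pos_of_pos hN0 _
  have hsq : (N : ℝ) ^ (-(7 / 4) : ℝ) * N ^ 2 = (N : ℝ) ^ (1 / 4 : ℝ) := by
    rw [← Real.rpow_natCast, ← Real.rpow_add hN0]
    norm_num
  have hcube : (N : ℝ) ^ 3 * ((N : ℝ) ^ (-(7 / 4) : ℝ)) ^ 2 = (N : ℝ) ^ (-(1 / 2) : ℝ) := by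
    rw [← Real.rpow_natCast, ← Real.rpow_natCast, ← Real.rpow_mul hN0.le, ← Real.rpow_add hN0]
    norm_num
  have hg : 0 ≤ g := le_trans (by positivity) hlow
  refine add_le_add (Real.exp_le_exp.2 (neg_le_neg ?_)) ?_
  · calc (N : ℝ) ^ (1 / 4 : ℝ) / 128 = (N : ℝ) ^ (-(7 / 4) : ℝ) / 2 * (N / 8) ^ 2 := by
          rw [← hsq]; ring
      _ ≤ g * ((N / 4 : ℕ) : ℝ) ^ 2 := by gcongr
  · calc 2 * C * N ^ 3 * g ^ 2 ≤ 2 * C * N ^ 3 * ((N : ℝ) ^ (-(7 / 4) : ℝ)) ^ 2 := by gcongr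
      _ = 2 * C * (N : ℝ) ^ (-(1 / 2) : ℝ) := by rw [← hcube]; ring

/-- for i.i.d. nonnegative heavy-tailed couplings with tail index `0 < α < 1`,
with probability tending to `1` every pair maximizing `J_{ij}` among the pairs with both
endpoints in the first `⌊N/2⌋` vertices is a bully bond, and in particular there is at least
one bully bond with both endpoints among the first `⌊N/2⌋` vertices. -/
theorem heavy_tailed_max_coupling_is_bully_bond (α : ℝ) (hα0 : 0 < α) (hα1 : α < 1)
    (L : ℝ → ℝ) (hL : ∀ a : ℝ, 0 < a → Tendsto (fun x => L (a * x) / L x) atTop (nhds 1))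
    (ν : Measure ℝ) [IsProbabilityMeasure ν]
    (hnonneg : ν {x : ℝ | x < 0} = 0)
    (htail : ∀ x : ℝ, 0 < x → (ν {y : ℝ | x ≤ y}).toReal = x ^ (-α) * L x) :
    Tendsto
      (fun N : ℕ => (Measure.pi fun _ : CoupIdx N => ν)
        {w : CoupIdx N → ℝ |
          (∀ i j : Fin N, i < j → (j : ℕ) < N / 2 →
            (∀ k l : Fin N, k < l → (l : ℕ) < N / 2 → JofReal w k l ≤ JofReal w i j) →
            IsBullyBond (JofReal w) i j) ∧
          ∃ i j : Fin N, i < j ∧ (j : ℕ) < N / 2 ∧ IsBullyBond (JofReal w) i j})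
      atTop (nhds 1) := by
  obtain ⟨q, t₀, hq, ht₀, hpos, hdec⟩ := exists_doubling_tail hα1 (hL 2 (by norm_num)) ν htail
  obtain ⟨C, hC, hM⟩ := exists_truncMean_le ν ht₀ hq hpos hdec
  have hlevels : Tendsto (fun n : ℕ => ν.real (Set.Ici (t₀ * 2 ^ n))) atTop (nhds 0) :=
    (tendsto_measureReal_Ici_atTop ν).comp
      ((tendsto_pow_atTop_atTop_of_one_lt (by norm_num)).const_mul_atTop ht₀)
  have hhalf : ∀ n : ℕ, ν.real (Set.Ici (t₀ * 2 ^ n)) / 2 ≤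
      ν.real (Set.Ici (t₀ * 2 ^ (n + 1))) := fun n => by
    have h := hdec (t₀ * 2 ^ n) (le_mul_of_one_le_right ht₀.le (one_le_pow₀ (by norm_num)))
    rw [show t₀ * 2 ^ (n + 1) = 2 * (t₀ * 2 ^ n) by ring]
    refine le_trans ?_ h
    have hg : 0 ≤ ν.real (Set.Ici (t₀ * 2 ^ n)) := measureReal_nonneg
    nlinarith
  have hsmall : ∀ᶠ N : ℕ in atTop, (N : ℝ) ^ (-(7 / 4) : ℝ) < ν.real (Set.Ici t₀) :=
    ((tendsto_rpow_neg_atTop (by norm_num)).comp tendsto_natCast_atTop_atTop).eventually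
      (gt_mem_nhds hpos)
  have hbound : ∀ᶠ N : ℕ in atTop, (Measure.pi fun _ : CoupIdx N => ν) (maxBullyEvent N)ᶜ ≤
      ENNReal.ofReal (Real.exp (-((N : ℝ) ^ (1 / 4 : ℝ) / 128)) +
        2 * C * (N : ℝ) ^ (-(1 / 2) : ℝ)) := by
    filter_upwards [hsmall, eventually_ge_atTop 8] with N hN hN8
    obtain ⟨n, hlow, hup⟩ := exists_half_le_and_le hlevels hhalf
      (a := (N : ℝ) ^ (-(7 / 4) : ℝ))
      (Real.rpow_pos_of_pos (by exact_mod_cast (by omega : 0 < N)) _) (by simpa using hN)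
    exact (pi_compl_maxBullyEvent_le N ν (by positivity) hC (hM n)).trans
      (ENNReal.ofReal_le_ofReal (exp_add_le_of_level hN8 hC hlow hup))
  have hzero : Tendsto (fun N : ℕ => ENNReal.ofReal
      (Real.exp (-((N : ℝ) ^ (1 / 4 : ℝ) / 128)) + 2 * C * (N : ℝ) ^ (-(1 / 2) : ℝ)))
      atTop (nhds 0) := by
    simpa using ENNReal.tendsto_ofReal (tendsto_exp_add_rpow C)
  have hone : Tendsto (fun N : ℕ => 1 - ENNReal.ofReal
      (Real.exp (-((N : ℝ) ^ (1 / 4 : ℝ) / 128)) + 2 * C * (N : ℝ) ^ (-(1 / 2) : ℝ)))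
      atTop (nhds 1) := by
    simpa using ENNReal.Tendsto.sub tendsto_const_nhds hzero (Or.inl ENNReal.one_ne_top)
  refine tendsto_of_tendsto_of_tendsto_of_le_of_le' hone tendsto_const_nhds ?_
    (Eventually.of_forall fun N => prob_le_one)
  filter_upwards [hbound] with N hN
  refine tsub_le_iff_right.2 (le_trans ?_ (add_le_add_right hN _))
  calc (1 : ENNReal)
      = (Measure.pi fun _ : CoupIdx N => ν) (maxBullyEvent N ∪ (maxBullyEvent N)ᶜ) := by
        rw [Set.union_compl_self, measure_univ]
    _ ≤ _ := measure_union_le _ _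
end
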